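/- For any θ ∈ (0, 1/2) and any μ with 0 < μ ≤ 9/50, for every w ∈ ℝ^{n−1} with μ/(4√2) ≤ ‖w‖ ≤ 1/(20√5), the gradient in w of the expected objective satisfies wᵀ ∇_w E[h_μ(q(w)ᵀ x)] / ‖w‖ ≥ θ/(20√(2π)), where x ∈ ℝ^n is a random vector with i.i.d. BG(θ) entries. -/

import Mathlib

open MeasureTheory ProbabilityTheory Real Matrix
open scoped RealInnerProductSpace ENNReal NNReal

noncomputable section

/-- The Bernoulli–Gaussian law `BG(θ)`: with probability `θ` a standard Gaussian,
with probability `1-θ` a point mass at `0`. -/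
def bg (θ : ℝ) : Measure ℝ :=
  θ.toNNReal • gaussianReal 0 1 + (1 - θ).toNNReal • Measure.dirac 0

instance bg.instIsFiniteMeasure (θ : ℝ) : IsFiniteMeasure (bg θ) := by
  unfold bg; infer_instance

/-- Law of an `n × p` matrix with i.i.d. `BG(θ)` entries. -/
def bgMatrix (θ : ℝ) (n p : ℕ) : Measure (Fin n → Fin p → ℝ) :=
  Measure.pi fun _ => Measure.pi fun _ => bg θ

/-- Law of a vector in `ℝ^n` with i.i.d. `BG(θ)` entries. -/
def bgVec (θ : ℝ) (n : ℕ) : Measure (Fin n → ℝ) :=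
  Measure.pi fun _ => bg θ

/-- The smooth sparsity surrogate `h_μ(z) = μ log cosh (z/μ)`. -/
def hmu (μ z : ℝ) : ℝ := μ * Real.log (Real.cosh (z / μ))

/-- Reparametrization `q(w) = (w, √(1-‖w‖²))` with `w` in the unit ball of `ℝ^{n-1}`. -/
def qmap (n : ℕ) (w : EuclideanSpace ℝ (Fin (n - 1))) : Fin n → ℝ :=
  fun i => if h : (i : ℕ) < n - 1 then w ⟨i, h⟩ else Real.sqrt (1 - ‖w‖ ^ 2)

/-- `f(q; Y) = (1/p) ∑ₖ h_μ(qᵀ yₖ)`. -/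
def ffun (n p : ℕ) (μ : ℝ) (Y : Matrix (Fin n) (Fin p) ℝ)
    (q : EuclideanSpace ℝ (Fin n)) : ℝ :=
  (p : ℝ)⁻¹ * ∑ k : Fin p, hmu μ (∑ i : Fin n, q i * Y i k)

/-- `g(w; Y) = f(q(w); Y)`. -/
def gfun (n p : ℕ) (μ : ℝ) (Y : Matrix (Fin n) (Fin p) ℝ)
    (w : EuclideanSpace ℝ (Fin (n - 1))) : ℝ :=
  (p : ℝ)⁻¹ * ∑ k : Fin p, hmu μ (∑ i : Fin n, qmap n w i * Y i k)

/-- Gradient `∇g(w; Y)` in `w`. -/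
def gradg (n p : ℕ) (μ : ℝ) (Y : Matrix (Fin n) (Fin p) ℝ)
    (w : EuclideanSpace ℝ (Fin (n - 1))) : EuclideanSpace ℝ (Fin (n - 1)) :=
  gradient (gfun n p μ Y) w

/-- Hessian `∇²g(w; Y)` in `w`, as a continuous linear map. -/
def hessg (n p : ℕ) (μ : ℝ) (Y : Matrix (Fin n) (Fin p) ℝ)
    (w : EuclideanSpace ℝ (Fin (n - 1))) :
    EuclideanSpace ℝ (Fin (n - 1)) →L[ℝ] EuclideanSpace ℝ (Fin (n - 1)) :=
  fderiv ℝ (gradg n p μ Y) w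

/-- The set `Γ = {w : ‖w‖ < √((4n-1)/(4n))}`. -/
def GammaSet (n : ℕ) : Set (EuclideanSpace ℝ (Fin (n - 1))) :=
  {w | ‖w‖ < Real.sqrt ((4 * (n : ℝ) - 1) / (4 * n))}

/-- Spectral (`ℓ²→ℓ²` operator) norm of а matrix. -/
def specNorm {m k : ℕ} (M : Matrix (Fin m) (Fin k) ℝ) : ℝ :=
  ‖LinearMap.toContinuousLinearMap (Matrix.toEuclideanLin M)‖

/-- Largest magnitude of an entry of a matrix. -/
def Minf {m k : ℕ} (M : Matrix (Fin m) (Fin k) ℝ) : ℝ := ⨆ i, ⨆ j, |M i j|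

/-- Condition number: ratio of largest to smallest singular value. -/
def kappa {n : ℕ} (s : Fin n → ℝ) : ℝ := (⨆ i, s i) / (⨅ i, s i)

/-- Signed standard basis vectors `{± e_i}` of `ℝ^n`. -/
def SignedBasis (n : ℕ) : Set (EuclideanSpace ℝ (Fin n)) :=
  {b | ∃ i : Fin n, b = EuclideanSpace.single i (1 : ℝ) ∨ b = -EuclideanSpace.single i (1 : ℝ)}

/-- Set of local minimizers of `f(·; Y)` over the unit sphere `S^{n-1}`. -/
def LocalMins (n p : ℕ) (μ : ℝ) (Y : Matrix (Fin n) (Fin p) ℝ) :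
    Set (EuclideanSpace ℝ (Fin n)) :=
  {q | q ∈ Metric.sphere (0 : EuclideanSpace ℝ (Fin n)) 1 ∧
       IsLocalMinOn (ffun n p μ Y) (Metric.sphere (0 : EuclideanSpace ℝ (Fin n)) 1) q}

/-- Expected objective `E_x[h_μ(q(w)ᵀ x)]` for `x` with i.i.d. `BG(θ)` entries. -/
def Gexp (n : ℕ) (θ μ : ℝ) (w : EuclideanSpace ℝ (Fin (n - 1))) : ℝ :=
  ∫ x, hmu μ (∑ i : Fin n, qmap n w i * x i) ∂(bgVec θ n)

/-! Let `W` be the contribution of the first `n - 1` coordinates to `q(w)ᵀ x`, `a` the last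
coordinate of `x` and `ρ = √(1 - ‖w‖²)`. Differentiating under the integral sign, the derivative
of the expected objective in the direction `w` is `E[tanh ((W + ρ a) / μ) (W - (‖w‖² / ρ) a)]`.
Since `tanh` is monotone, `W tanh ((W + ρ a) / μ) ≥ W tanh (ρ a / μ)`, whose mean is zero because
`W` and `a` are independent and `E W = 0`; on the event `a = 0`, of probability `1 - θ`, one keeps
`W tanh (W / μ)` instead. Its mean is bounded below through `t tanh (t / μ) ≥ k t² - k³ t⁴ / 3`
for `0 < k ≤ 1 / μ`, applied with `k = c / ‖w‖`, and the second and fourth moments of `W`. The term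
in `a` costs at most `θ ‖w‖² / ρ`. -/

lemma mul_apply_le_mul_apply_of_monotone {f : ℝ → ℝ} (hf : Monotone f) {t a b : ℝ}
    (h : 0 ≤ t * (b - a)) : t * f a ≤ t * f b := by
  rcases lt_trichotomy t 0 with ht | rfl | ht
  · exact mul_le_mul_of_nonpos_left (hf (by nlinarith)) ht.le
  · simp
  · exact mul_le_mul_of_nonneg_left (hf (by nlinarith)) ht.le

lemma hasDerivAt_tanh (x : ℝ) : HasDerivAt tanh (1 - tanh x ^ 2) x := by
  have h := (hasDerivAt_sinh x).div (hasDerivAt_cosh x) (cosh_pos x).ne'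
  refine (h.congr_deriv ?_).congr_of_eventuallyEq (.of_forall tanh_eq_sinh_div_cosh)
  rw [tanh_eq_sinh_div_cosh]
  field_simp [(cosh_pos x).ne']

lemma continuous_tanh : Continuous tanh :=
  continuous_iff_continuousAt.2 fun x => (hasDerivAt_tanh x).continuousAt

lemma monotone_tanh : Monotone tanh :=
  monotone_of_hasDerivAt_nonneg hasDerivAt_tanh fun x => sub_nonneg.2 (tanh_sq_lt_one x).le

lemma tanh_nonneg {x : ℝ} (hx : 0 ≤ x) : 0 ≤ tanh x := by
  simpa using monotone_tanh hx

lemma tanh_le_self {x : ℝ} (hx : 0 ≤ x) : tanh x ≤ x := by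
  have hd (y : ℝ) : HasDerivAt (fun y => y - tanh y) (tanh y ^ 2) y :=
    ((hasDerivAt_id y).sub (hasDerivAt_tanh y)).congr_deriv (by ring)
  simpa using monotone_of_hasDerivAt_nonneg hd (fun y => sq_nonneg _) hx

lemma sub_cube_div_three_le_tanh {x : ℝ} (hx : 0 ≤ x) : x - x ^ 3 / 3 ≤ tanh x := by
  have hd (y : ℝ) :
      HasDerivAt (fun y => tanh y - (y - y ^ 3 / 3)) (y ^ 2 - tanh y ^ 2) y :=
    ((hasDerivAt_tanh y).sub
      ((hasDerivAt_id y).sub ((hasDerivAt_pow 3 y).div_const 3))).congr_deriv (by norm_num)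
  have hmono : MonotoneOn (fun y => tanh y - (y - y ^ 3 / 3)) (Set.Ici 0) := by
    refine monotoneOn_of_hasDerivWithinAt_nonneg (convex_Ici 0)
      (fun y _ => (hd y).continuousAt.continuousWithinAt)
      (fun y _ => (hd y).hasDerivWithinAt) fun y hy => ?_
    have hy : 0 ≤ y := interior_subset hy
    exact sub_nonneg.2 (pow_le_pow_left₀ (tanh_nonneg hy) (tanh_le_self hy) 2)
  simpa using hmono Set.self_mem_Ici hx hx

lemma sq_sub_pow_four_div_three_le_mul_tanh (x : ℝ) : x ^ 2 - x ^ 4 / 3 ≤ x * tanh x := by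
  rcases le_total 0 x with hx | hx
  · nlinarith [mul_le_mul_of_nonneg_left (sub_cube_div_three_le_tanh hx) hx]
  · have h := sub_cube_div_three_le_tanh (neg_nonneg.2 hx)
    rw [tanh_neg] at h
    nlinarith [mul_le_mul_of_nonneg_left h (neg_nonneg.2 hx)]

lemma mul_sq_sub_le_mul_tanh_div {k μ : ℝ} (hk : 0 < k) (hkμ : k ≤ 1 / μ) (t : ℝ) :
    k * t ^ 2 - k ^ 3 / 3 * t ^ 4 ≤ t * tanh (t / μ) :=
  calc k * t ^ 2 - k ^ 3 / 3 * t ^ 4 = ((k * t) ^ 2 - (k * t) ^ 4 / 3) / k := by field_simp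
    _ ≤ k * t * tanh (k * t) / k := by gcongr; exact sq_sub_pow_four_div_three_le_mul_tanh _
    _ = t * tanh (k * t) := by field_simp
    _ ≤ t * tanh (t / μ) := mul_apply_le_mul_apply_of_monotone monotone_tanh <| by
      rw [show t * (t / μ - k * t) = t ^ 2 * (1 / μ - k) by ring]
      exact mul_nonneg (sq_nonneg t) (sub_nonneg.2 hkμ)

lemma hasDerivAt_hmu {μ : ℝ} (hμ : μ ≠ 0) (z : ℝ) : HasDerivAt (hmu μ) (tanh (z / μ)) z := by
  have h := (((hasDerivAt_id z).div_const μ).cosh.log (cosh_pos _).ne').const_mul μ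
  refine h.congr_deriv ?_
  rw [tanh_eq_sinh_div_cosh]
  simp only [id]
  field_simp

lemma lipschitzWith_hmu (μ : ℝ) : LipschitzWith 1 (hmu μ) := by
  rcases eq_or_ne μ 0 with rfl | hμ
  · have h : hmu 0 = fun _ => 0 := by ext; simp [hmu]
    rw [h]
    exact (LipschitzWith.const 0).weaken zero_le_one
  · refine lipschitzWith_of_nnnorm_deriv_le (fun z => (hasDerivAt_hmu hμ z).differentiableAt)
      fun z => ?_
    rw [(hasDerivAt_hmu hμ z).deriv]
    exact (abs_tanh_lt_one _).le

section IntegralHmu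

variable {Ω E H : Type*} {mΩ : MeasurableSpace Ω} {P : Measure Ω} [NormedAddCommGroup E]
  [NormedSpace ℝ E] [NormedAddCommGroup H] [NormedSpace ℝ H]

lemma norm_tanh_smul_le (t : ℝ) (v : E) : ‖tanh t • v‖ ≤ ‖v‖ := by
  rw [norm_smul]
  exact mul_le_of_le_one_left (norm_nonneg v) (abs_tanh_lt_one t).le

lemma integrable_tanh_smul {Y : Ω → ℝ} {V : Ω → E} (hY : AEStronglyMeasurable Y P)
    (hV : Integrable V P) : Integrable (fun ω => tanh (Y ω) • V ω) P :=
  hV.mono ((continuous_tanh.comp_aestronglyMeasurable hY).smul hV.aestronglyMeasurable)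
    (.of_forall fun _ => norm_tanh_smul_le _ _)

lemma integrable_tanh_apply_smul {X : Ω → StrongDual ℝ H} (hX : Integrable X P) (μ : ℝ) (q : H) :
    Integrable (fun ω => tanh (X ω q / μ) • X ω) P :=
  integrable_tanh_smul ((hX.apply_continuousLinearMap q).div_const μ).aestronglyMeasurable hX

lemma hasFDerivAt_integral_hmu {X : Ω → StrongDual ℝ H} (hX : Integrable X P) {μ : ℝ}
    (hμ : μ ≠ 0) (q : H) :
    HasFDerivAt (fun q => ∫ ω, hmu μ (X ω q) ∂P) (∫ ω, tanh (X ω q / μ) • X ω ∂P) q := by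
  have hF (q : H) : Integrable (fun ω => hmu μ (X ω q)) P :=
    memLp_one_iff_integrable.1 <| (lipschitzWith_hmu μ).comp_memLp (by simp [hmu]) <|
      memLp_one_iff_integrable.2 (hX.apply_continuousLinearMap q)
  exact hasFDerivAt_integral_of_dominated_of_fderiv_le (𝕜 := ℝ) (s := Set.univ)
    (F' := fun q ω => tanh (X ω q / μ) • X ω) (bound := fun ω => ‖X ω‖)
    Filter.univ_mem (.of_forall fun q => (hF q).aestronglyMeasurable) (hF q)
    (integrable_tanh_apply_smul hX μ q).aestronglyMeasurable
    (.of_forall fun ω _ _ => norm_tanh_smul_le (E := StrongDual ℝ H) _ (X ω)) hX.norm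
    (.of_forall fun ω q _ => (hasDerivAt_hmu hμ _).comp_hasFDerivAt q (X ω).hasFDerivAt)

end IntegralHmu

section Moments

variable {Ω : Type*} {mΩ : MeasurableSpace Ω} {P : Measure Ω} [IsProbabilityMeasure P]

lemma integrable_pow_of_memLp {X : Ω → ℝ} {p k : ℕ} (hX : MemLp X p P) (hk : k ≤ p) :
    Integrable (fun ω => X ω ^ k) P := by
  have h := (hX.mono_exponent (show (k : ℝ≥0∞) ≤ p by exact_mod_cast hk)).integrable_norm_pow'
  exact (integrable_norm_iff (hX.1.pow k)).1 (by simpa only [Pi.pow_apply, norm_pow] using h)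

lemma integral_add_pow_four_of_indepFun {X Y : Ω → ℝ} (hX : MemLp X (4 : ℕ) P)
    (hY : MemLp Y (4 : ℕ) P) (hXY : X ⟂ᵢ[P] Y) (hX0 : P[X] = 0) (hY0 : P[Y] = 0) :
    ∫ ω, (X ω + Y ω) ^ 4 ∂P =
      ∫ ω, X ω ^ 4 ∂P + 6 * (∫ ω, X ω ^ 2 ∂P) * (∫ ω, Y ω ^ 2 ∂P) + ∫ ω, Y ω ^ 4 ∂P := by
  have hpow (k l : ℕ) : (fun ω => X ω ^ k) ⟂ᵢ[P] (fun ω => Y ω ^ l) :=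
    hXY.comp (φ := fun x => x ^ k) (ψ := fun y => y ^ l) (by fun_prop) (by fun_prop)
  have hterm (k : ℕ) (hk : k ∈ Finset.range 5) :
      Integrable (fun ω => X ω ^ k * Y ω ^ (4 - k) * (Nat.choose 4 k : ℝ)) P :=
    ((hpow k (4 - k)).integrable_mul
      (integrable_pow_of_memLp hX (Nat.lt_succ_iff.1 (Finset.mem_range.1 hk)))
      (integrable_pow_of_memLp hY (Nat.sub_le 4 k))).mul_const _
  have hmul (k : ℕ) : ∫ ω, X ω ^ k * Y ω ^ (4 - k) * (Nat.choose 4 k : ℝ) ∂P =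
      (∫ ω, X ω ^ k ∂P) * (∫ ω, Y ω ^ (4 - k) ∂P) * (Nat.choose 4 k : ℝ) := by
    rw [integral_mul_const, (hpow k (4 - k)).integral_fun_mul_eq_mul_integral
      (hX.1.pow k) (hY.1.pow (4 - k))]
  simp_rw [add_pow]
  rw [integral_finsetSum _ hterm]
  simp_rw [hmul]
  simp only [Finset.sum_range_succ, Finset.range_one, Finset.sum_singleton, pow_zero,
    integral_const, probReal_univ, smul_eq_mul, mul_one, tsub_zero, one_mul, Nat.choose,
    Nat.cast_one, pow_one, hX0, Nat.add_one_sub_one, zero_mul, add_zero, Nat.reduceAdd,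
    Nat.cast_ofNat, Nat.reduceSub, hY0, mul_zero, tsub_self]
  ring

lemma integral_sum_sq_of_iIndepFun {ι : Type*} {X : ι → Ω → ℝ} (hX : ∀ i, MemLp (X i) 2 P)
    (hind : iIndepFun X P) (hX0 : ∀ i, P[X i] = 0) (s : Finset ι) :
    ∫ ω, (∑ i ∈ s, X i ω) ^ 2 ∂P = ∑ i ∈ s, ∫ ω, X i ω ^ 2 ∂P := by
  have hvar := IndepFun.variance_sum (s := s) (fun i _ => hX i)
    fun i _ j _ hij => hind.indepFun hij
  have hint : P[∑ i ∈ s, X i] = 0 := by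
    simp only [Finset.sum_apply]
    rw [integral_finsetSum _ fun i _ => (hX i).integrable one_le_two]
    exact Finset.sum_eq_zero fun i _ => hX0 i
  rw [variance_of_integral_eq_zero
    (memLp_finsetSum' s fun i _ => hX i).1.aemeasurable hint] at hvar
  simpa [variance_of_integral_eq_zero (hX _).1.aemeasurable (hX0 _)] using hvar

lemma integral_sum_pow_four_le {ι : Type*} {X : ι → Ω → ℝ} (hX : ∀ i, MemLp (X i) (4 : ℕ) P)
    (hind : iIndepFun X P) (hX0 : ∀ i, P[X i] = 0) {K : ℝ} (hK : 3 ≤ K)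
    (hX4 : ∀ i, ∫ ω, X i ω ^ 4 ∂P ≤ K * (∫ ω, X i ω ^ 2 ∂P) ^ 2) (s : Finset ι) :
    ∫ ω, (∑ i ∈ s, X i ω) ^ 4 ∂P ≤ K * (∑ i ∈ s, ∫ ω, X i ω ^ 2 ∂P) ^ 2 := by
  classical
  have hX2 (i : ι) : MemLp (X i) 2 P := (hX i).mono_exponent (by norm_num)
  induction s using Finset.induction_on with
  | empty => simp
  | insert j s hj ih =>
    have hS : MemLp (fun ω => ∑ i ∈ s, X i ω) (4 : ℕ) P := memLp_finsetSum s fun i _ => hX i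
    have hS0 : ∫ ω, ∑ i ∈ s, X i ω ∂P = 0 := by
      rw [integral_finsetSum _ fun i _ => (hX2 i).integrable one_le_two]
      exact Finset.sum_eq_zero fun i _ => hX0 i
    have hjS : X j ⟂ᵢ[P] fun ω => ∑ i ∈ s, X i ω := by
      have h := hind.indepFun_finsetSum_of_notMem₀ (fun i => (hX i).1.aemeasurable) hj
      simpa only [Finset.sum_fn] using h.symm
    simp only [Finset.sum_insert hj]
    rw [integral_add_pow_four_of_indepFun (hX j) hS hjS (hX0 j) hS0,
      integral_sum_sq_of_iIndepFun hX2 hind hX0]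
    have h0 : 0 ≤ (∫ ω, X j ω ^ 2 ∂P) * ∑ i ∈ s, ∫ ω, X i ω ^ 2 ∂P :=
      mul_nonneg (integral_nonneg fun ω => sq_nonneg _)
        (Finset.sum_nonneg fun i _ => integral_nonneg fun ω => sq_nonneg _)
    -- the cross term `6 * E[X²] * E[S²]` fits into `2 * K * E[X²] * E[S²]` because `3 ≤ K`
    linarith [hX4 j, mul_le_mul_of_nonneg_right hK h0]

end Moments

lemma integrable_pow_gaussianReal (k : ℕ) : Integrable (fun x : ℝ => x ^ k) (gaussianReal 0 1) :=
  integrable_pow_of_memLp (memLp_id_gaussianReal' (k : ℝ≥0∞) (ENNReal.natCast_ne_top k)) le_rfl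

lemma integral_sq_gaussianReal : ∫ x : ℝ, x ^ 2 ∂gaussianReal 0 1 = 1 := by
  have h := variance_fun_id_gaussianReal (μ := 0) (v := 1)
  rw [variance_of_integral_eq_zero (by fun_prop) integral_id_gaussianReal] at h
  simpa using h

/-- If `X`, `Y` are independent standard Gaussians then `X + Y` has the law of `√2 * X`, so the
fourth moment `M` satisfies `4 * M = 2 * M + 6`. -/
lemma integral_pow_four_gaussianReal : ∫ x : ℝ, x ^ 4 ∂gaussianReal 0 1 = 3 := by
  set γ := gaussianReal 0 1
  have hL : MemLp (id : ℝ → ℝ) (4 : ℕ) γ := memLp_id_gaussianReal' 4 (by simp)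
  have hfst : MeasurePreserving Prod.fst (γ.prod γ) γ := measurePreserving_fst
  have hsnd : MeasurePreserving Prod.snd (γ.prod γ) γ := measurePreserving_snd
  have hind : (Prod.fst : ℝ × ℝ → ℝ) ⟂ᵢ[γ.prod γ] Prod.snd :=
    indepFun_prod (X := id) (Y := id) measurable_id measurable_id
  have hfst_pow (k : ℕ) : ∫ p, p.1 ^ k ∂γ.prod γ = ∫ x, x ^ k ∂γ := by
    simpa using integral_fun_fst (μ := γ) (ν := γ) fun x : ℝ => x ^ k
  have hsnd_pow (k : ℕ) : ∫ p, p.2 ^ k ∂γ.prod γ = ∫ x, x ^ k ∂γ := by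
    simpa using integral_fun_snd (μ := γ) (ν := γ) fun x : ℝ => x ^ k
  have hγ : ∫ x, x ∂γ = 0 := integral_id_gaussianReal
  have hadd := integral_add_pow_four_of_indepFun (hL.comp_measurePreserving hfst)
    (hL.comp_measurePreserving hsnd) hind (by simpa [hγ] using hfst_pow 1)
    (by simpa [hγ] using hsnd_pow 1)
  simp only [Function.comp_apply, id, hfst_pow, hsnd_pow, γ, integral_sq_gaussianReal] at hadd
  have hlaw : (γ.prod γ).map (Prod.fst + Prod.snd) = γ.map (√2 * ·) := by
    rw [gaussianReal_add_gaussianReal_of_indepFun hind hfst.map_eq hsnd.map_eq,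
      gaussianReal_map_const_mul]
    congr 1
    · simp
    · ext
      simp only [NNReal.coe_add, NNReal.coe_one, Nat.ofNat_nonneg, sq_sqrt, mul_one, NNReal.coe_mk]
      norm_num
  have hscale : ∫ p, (p.1 + p.2) ^ 4 ∂γ.prod γ = ∫ x, (√2 * x) ^ 4 ∂γ := by
    have h := congrArg (fun m => ∫ x, x ^ 4 ∂m) hlaw
    rwa [integral_map (by fun_prop) (by fun_prop), integral_map (by fun_prop) (by fun_prop)] at h
  have h4 : (√2 : ℝ) ^ 4 = 4 := by
    rw [show 4 = 2 * 2 from rfl, pow_mul, sq_sqrt zero_le_two]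
    norm_num
  simp only [mul_pow, integral_const_mul, h4] at hscale
  linarith

lemma isProbabilityMeasure_bg {θ : ℝ} (hθ : θ ∈ Set.Icc 0 1) : IsProbabilityMeasure (bg θ) := by
  constructor
  simp only [bg, Measure.add_apply, Measure.smul_apply, measure_univ, ENNReal.smul_def,
    smul_eq_mul, mul_one]
  rw [← ENNReal.coe_add, ← toNNReal_add hθ.1 (sub_nonneg.2 hθ.2)]
  simp

lemma integrable_bg {θ : ℝ} {f : ℝ → ℝ} (hf : Integrable f (gaussianReal 0 1)) :
    Integrable f (bg θ) :=
  hf.smul_measure_nnreal.add_measure (integrable_dirac (by simp)).smul_measure_nnreal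

lemma integral_bg {θ : ℝ} (hθ : θ ∈ Set.Icc 0 1) {f : ℝ → ℝ}
    (hf : Integrable f (gaussianReal 0 1)) :
    ∫ x, f x ∂bg θ = θ * ∫ x, f x ∂gaussianReal 0 1 + (1 - θ) * f 0 := by
  rw [bg, integral_add_measure hf.smul_measure_nnreal
    (integrable_dirac (by simp)).smul_measure_nnreal,
    integral_smul_nnreal_measure, integral_smul_nnreal_measure, integral_dirac]
  simp [NNReal.smul_def, hθ.1, hθ.2]

lemma memLp_id_bg (θ : ℝ) (k : ℕ) : MemLp id k (bg θ) := by
  rcases eq_or_ne k 0 with rfl | hk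
  · simpa using aestronglyMeasurable_id
  rw [← integrable_norm_rpow_iff (by fun_prop) (by simpa using hk) (by simp)]
  simpa [norm_pow] using integrable_bg (θ := θ) (integrable_pow_gaussianReal k).norm

lemma integral_pow_bg {θ : ℝ} (hθ : θ ∈ Set.Icc 0 1) {k : ℕ} (hk : k ≠ 0) :
    ∫ x, x ^ k ∂bg θ = θ * ∫ x, x ^ k ∂gaussianReal 0 1 := by
  rw [integral_bg hθ (integrable_pow_gaussianReal k), zero_pow hk, mul_zero, add_zero]

lemma integral_id_bg {θ : ℝ} (hθ : θ ∈ Set.Icc 0 1) : ∫ x, x ∂bg θ = 0 := by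
  simpa using integral_pow_bg hθ one_ne_zero

lemma integral_sq_bg {θ : ℝ} (hθ : θ ∈ Set.Icc 0 1) : ∫ x, x ^ 2 ∂bg θ = θ := by
  rw [integral_pow_bg hθ two_ne_zero, integral_sq_gaussianReal, mul_one]

lemma integral_pow_four_bg {θ : ℝ} (hθ : θ ∈ Set.Icc 0 1) : ∫ x, x ^ 4 ∂bg θ = 3 * θ := by
  rw [integral_pow_bg hθ four_ne_zero, integral_pow_four_gaussianReal, mul_comm]

lemma integral_abs_bg_le {θ : ℝ} (hθ : θ ∈ Set.Icc 0 1) : ∫ x, |x| ∂bg θ ≤ θ := by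
  have h1 : Integrable (fun x : ℝ => |x|) (gaussianReal 0 1) := by
    simpa using (integrable_pow_gaussianReal 1).abs
  have h2 := integrable_pow_gaussianReal 2
  have h : ∫ x : ℝ, |x| ∂gaussianReal 0 1 ≤ 1 :=
    calc ∫ x : ℝ, |x| ∂gaussianReal 0 1
      _ ≤ ∫ x : ℝ, (1 + x ^ 2) / 2 ∂gaussianReal 0 1 :=
        integral_mono h1 (((integrable_const 1).add h2).div_const 2) fun x => by
          dsimp only
          nlinarith [sq_nonneg (|x| - 1), sq_abs x]
      _ = 1 := by
        rw [integral_div, integral_add (integrable_const 1) h2, integral_sq_gaussianReal]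
        simp
  rw [integral_bg hθ h1, abs_zero, mul_zero, add_zero]
  exact mul_le_of_le_one_right hθ.1 h

lemma measureReal_bg_singleton_zero {θ : ℝ} (hθ : θ ∈ Set.Icc 0 1) :
    (bg θ).real {0} = 1 - θ := by
  have := nullSingletonClass_gaussianReal (μ := 0) (v := 1) one_ne_zero
  have h := sub_nonneg.2 hθ.2
  simp [bg, measureReal_def, h]

section DotProduct

variable {θ : ℝ} {n : ℕ}

lemma isProbabilityMeasure_bgVec (hθ : θ ∈ Set.Icc 0 1) : IsProbabilityMeasure (bgVec θ n) :=
  have := isProbabilityMeasure_bg hθ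
  inferInstanceAs (IsProbabilityMeasure (Measure.pi fun _ => bg θ))

lemma measurePreserving_eval_bgVec (hθ : θ ∈ Set.Icc 0 1) (i : Fin n) :
    MeasurePreserving (fun x : Fin n → ℝ => x i) (bgVec θ n) (bg θ) :=
  have := isProbabilityMeasure_bg hθ
  measurePreserving_eval (fun _ => bg θ) i

lemma integral_eval_bgVec (hθ : θ ∈ Set.Icc 0 1) (i : Fin n) {f : ℝ → ℝ} (hf : Continuous f) :
    ∫ x, f (x i) ∂bgVec θ n = ∫ t, f t ∂bg θ := by
  rw [← (measurePreserving_eval_bgVec hθ i).map_eq,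
    integral_map (measurable_pi_apply i).aemeasurable hf.aestronglyMeasurable]

lemma memLp_mul_eval_bgVec (hθ : θ ∈ Set.Icc 0 1) (k : ℕ) (c : ℝ) (i : Fin n) :
    MemLp (fun x : Fin n → ℝ => c * x i) k (bgVec θ n) :=
  ((memLp_id_bg θ k).comp_measurePreserving (measurePreserving_eval_bgVec hθ i)).const_mul c

lemma integrable_eval_bgVec (hθ : θ ∈ Set.Icc 0 1) (i : Fin n) :
    Integrable (fun x : Fin n → ℝ => x i) (bgVec θ n) := by
  have := isProbabilityMeasure_bgVec (n := n) hθ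
  simpa using (memLp_mul_eval_bgVec hθ 1 1 i).integrable (by simp)

lemma memLp_dotProduct_bgVec (hθ : θ ∈ Set.Icc 0 1) (k : ℕ) (v : Fin n → ℝ) :
    MemLp (fun x => v ⬝ᵥ x) k (bgVec θ n) :=
  memLp_finsetSum _ fun i _ => memLp_mul_eval_bgVec hθ k (v i) i

lemma integral_mul_eval_bgVec (hθ : θ ∈ Set.Icc 0 1) (c : ℝ) (i : Fin n) :
    ∫ x, c * x i ∂bgVec θ n = 0 := by
  rw [integral_const_mul, integral_eval_bgVec hθ i continuous_id', integral_id_bg hθ, mul_zero]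

lemma integral_mul_eval_sq_bgVec (hθ : θ ∈ Set.Icc 0 1) (c : ℝ) (i : Fin n) :
    ∫ x, (c * x i) ^ 2 ∂bgVec θ n = θ * c ^ 2 := by
  simp_rw [mul_pow]
  rw [integral_const_mul, integral_eval_bgVec hθ i (continuous_pow 2), integral_sq_bg hθ, mul_comm]

lemma iIndepFun_mul_eval_bgVec (hθ : θ ∈ Set.Icc 0 1) (v : Fin n → ℝ) :
    iIndepFun (fun i (x : Fin n → ℝ) => v i * x i) (bgVec θ n) :=
  have := isProbabilityMeasure_bg hθ
  iIndepFun_pi (X := fun i t => v i * t) fun i => by fun_prop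

lemma integral_dotProduct_bgVec (hθ : θ ∈ Set.Icc 0 1) (v : Fin n → ℝ) :
    ∫ x, v ⬝ᵥ x ∂bgVec θ n = 0 := by
  simp only [dotProduct]
  rw [integral_finsetSum _ fun i _ => (integrable_eval_bgVec hθ i).const_mul (v i)]
  exact Finset.sum_eq_zero fun i _ => integral_mul_eval_bgVec hθ (v i) i

lemma integral_dotProduct_sq_bgVec (hθ : θ ∈ Set.Icc 0 1) (v : Fin n → ℝ) :
    ∫ x, (v ⬝ᵥ x) ^ 2 ∂bgVec θ n = θ * ∑ i, v i ^ 2 := by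
  have := isProbabilityMeasure_bgVec (n := n) hθ
  simp only [dotProduct]
  rw [integral_sum_sq_of_iIndepFun (fun i => memLp_mul_eval_bgVec hθ 2 (v i) i)
    (iIndepFun_mul_eval_bgVec hθ v) fun i => integral_mul_eval_bgVec hθ (v i) i]
  simp_rw [integral_mul_eval_sq_bgVec hθ, Finset.mul_sum]

lemma integral_dotProduct_pow_four_bgVec_le (hθ : θ ∈ Set.Ioc 0 1) (v : Fin n → ℝ) :
    ∫ x, (v ⬝ᵥ x) ^ 4 ∂bgVec θ n ≤ 3 * θ * (∑ i, v i ^ 2) ^ 2 := by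
  have hθ' := Set.Ioc_subset_Icc_self hθ
  have := isProbabilityMeasure_bgVec (n := n) hθ'
  have hθ0 : θ ≠ 0 := hθ.1.ne'
  have hkurt (i : Fin n) : ∫ x, (v i * x i) ^ 4 ∂bgVec θ n =
      3 / θ * (∫ x, (v i * x i) ^ 2 ∂bgVec θ n) ^ 2 := by
    simp_rw [integral_mul_eval_sq_bgVec hθ', mul_pow]
    rw [integral_const_mul, integral_eval_bgVec hθ' i (continuous_pow 4),
      integral_pow_four_bg hθ']
    field_simp
  have hK : 3 ≤ 3 / θ := le_div_self zero_le_three hθ.1 hθ.2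
  calc ∫ x, (v ⬝ᵥ x) ^ 4 ∂bgVec θ n
    _ ≤ 3 / θ * (∑ i, ∫ x, (v i * x i) ^ 2 ∂bgVec θ n) ^ 2 :=
      integral_sum_pow_four_le (fun i => memLp_mul_eval_bgVec hθ' 4 (v i) i)
        (iIndepFun_mul_eval_bgVec hθ' v) (fun i => integral_mul_eval_bgVec hθ' (v i) i) hK
        (fun i => (hkurt i).le) Finset.univ
    _ = 3 * θ * (∑ i, v i ^ 2) ^ 2 := by
      simp_rw [integral_mul_eval_sq_bgVec hθ', ← Finset.mul_sum]
      field_simp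

end DotProduct

lemma hasFDerivAt_sqrt_one_sub_norm_sq {E : Type*} [NormedAddCommGroup E] [InnerProductSpace ℝ E]
    {w : E} (hw : ‖w‖ < 1) :
    HasFDerivAt (fun w : E => √(1 - ‖w‖ ^ 2)) (-(1 / √(1 - ‖w‖ ^ 2)) • innerSL ℝ w) w := by
  have h0 : 0 < 1 - ‖w‖ ^ 2 := by nlinarith [norm_nonneg w]
  have h := ((hasStrictFDerivAt_norm_sq w).hasFDerivAt.const_sub 1).sqrt h0.ne'
  refine h.congr_fderiv ?_
  ext u
  have := (sqrt_pos.2 h0).ne'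
  simp only [one_div, _root_.mul_inv_rev, smul_neg, _root_.neg_apply, _root_.smul_apply,
    coe_innerSL_apply, nsmul_eq_mul, Nat.cast_ofNat, smul_eq_mul, neg_smul, neg_inj]
  field_simp

/-- The vector of `ℝ^n` whose first `n - 1` coordinates are those of `p.1` and whose last
coordinate is `p.2`, so that `qmap n w = appendLast n (w, √(1 - ‖w‖ ^ 2))`. -/
def appendLast (n : ℕ) : EuclideanSpace ℝ (Fin (n - 1)) × ℝ →L[ℝ] (Fin n → ℝ) :=
  ContinuousLinearMap.pi fun i =>
    if h : (i : ℕ) < n - 1 then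
      (EuclideanSpace.proj (𝕜 := ℝ) (⟨i, h⟩ : Fin (n - 1))).comp (ContinuousLinearMap.fst ℝ _ _)
    else ContinuousLinearMap.snd ℝ _ _

lemma appendLast_apply (n : ℕ) (p : EuclideanSpace ℝ (Fin (n - 1)) × ℝ) (i : Fin n) :
    appendLast n p i = if h : (i : ℕ) < n - 1 then p.1 ⟨i, h⟩ else p.2 := by
  by_cases h : (i : ℕ) < n - 1 <;> simp [appendLast, h]

lemma qmap_eq_appendLast (n : ℕ) (w : EuclideanSpace ℝ (Fin (n - 1))) :
    qmap n w = appendLast n (w, √(1 - ‖w‖ ^ 2)) := by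
  ext i
  rw [appendLast_apply, qmap]

section AppendLast

variable {m : ℕ} (w : EuclideanSpace ℝ (Fin (m + 1 - 1))) (t : ℝ) (x : Fin (m + 1) → ℝ)

lemma appendLast_castSucc (i : Fin m) : appendLast (m + 1) (w, t) i.castSucc = w i :=
  (appendLast_apply _ _ _).trans (dif_pos i.isLt)

lemma appendLast_last : appendLast (m + 1) (w, t) (Fin.last m) = t :=
  (appendLast_apply _ _ _).trans (dif_neg (lt_irrefl m))

lemma appendLast_dotProduct :
    appendLast (m + 1) (w, t) ⬝ᵥ x = appendLast (m + 1) (w, 0) ⬝ᵥ x + t * x (Fin.last m) := by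
  simp only [dotProduct, Fin.sum_univ_castSucc, appendLast_castSucc, appendLast_last]
  ring

lemma sum_appendLast_zero_sq : ∑ i, appendLast (m + 1) (w, 0) i ^ 2 = ‖w‖ ^ 2 := by
  simp only [Fin.sum_univ_castSucc, appendLast_castSucc, appendLast_last]
  simp [EuclideanSpace.norm_sq_eq]

end AppendLast

lemma hasFDerivAt_qmap {n : ℕ} {w : EuclideanSpace ℝ (Fin (n - 1))} (hw : ‖w‖ < 1) :
    HasFDerivAt (qmap n) ((appendLast n).comp
      ((ContinuousLinearMap.id ℝ _).prod (-(1 / √(1 - ‖w‖ ^ 2)) • innerSL ℝ w))) w := by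
  rw [funext (qmap_eq_appendLast n)]
  exact (appendLast n).hasFDerivAt.comp w
    ((hasFDerivAt_id w).prodMk (hasFDerivAt_sqrt_one_sub_norm_sq hw))

/-- The functional `q ↦ x ⬝ᵥ q`, as a continuous linear function of `x`. -/
def dotProductCLM (n : ℕ) : (Fin n → ℝ) →L[ℝ] StrongDual ℝ (Fin n → ℝ) :=
  (dotProductBilin ℝ ℝ).toContinuousBilinearMap

lemma dotProductCLM_apply {n : ℕ} (x q : Fin n → ℝ) : dotProductCLM n x q = q ⬝ᵥ x :=
  dotProduct_comm x q

lemma integrable_dotProductCLM_bgVec {θ : ℝ} (hθ : θ ∈ Set.Icc 0 1) (n : ℕ) :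
    Integrable (dotProductCLM n) (bgVec θ n) :=
  (dotProductCLM n).integrable_comp (.of_eval (integrable_eval_bgVec hθ))

lemma inner_gradient_Gexp_self {n : ℕ} {θ μ : ℝ} (hθ : θ ∈ Set.Icc 0 1) (hμ : μ ≠ 0)
    {w : EuclideanSpace ℝ (Fin (n - 1))} (hw : ‖w‖ < 1) :
    ⟪w, gradient (Gexp n θ μ) w⟫ =
      ∫ x, tanh (qmap n w ⬝ᵥ x / μ) *
        (appendLast n (w, -(‖w‖ ^ 2 / √(1 - ‖w‖ ^ 2))) ⬝ᵥ x) ∂bgVec θ n := by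
  have hX := integrable_dotProductCLM_bgVec hθ n
  have hG : Gexp n θ μ = (fun q => ∫ x, hmu μ (dotProductCLM n x q) ∂bgVec θ n) ∘ qmap n := by
    ext w
    simp only [Gexp, Function.comp_apply, dotProductCLM_apply, dotProduct]
  have hd := (hasFDerivAt_integral_hmu hX hμ (qmap n w)).comp w (hasFDerivAt_qmap hw)
  rw [real_inner_comm, gradient, InnerProductSpace.toDual_symm_apply, hG, hd.fderiv,
    ContinuousLinearMap.comp_apply,
    ContinuousLinearMap.integral_apply (integrable_tanh_apply_smul hX μ (qmap n w))]
  simp [dotProductCLM_apply, div_eq_inv_mul]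

lemma le_tanh_add_mul_add {μ κ : ℝ} (hμ : 0 ≤ μ) (hκ : 0 ≤ κ) (ρ t a : ℝ) :
    t * tanh (ρ * a / μ) + Set.indicator {0} 1 a * (t * tanh (t / μ)) - κ * |a| ≤
      tanh ((t + ρ * a) / μ) * (t + -κ * a) := by
  have hmono : t * tanh (ρ * a / μ) + Set.indicator {0} 1 a * (t * tanh (t / μ)) ≤
      t * tanh ((t + ρ * a) / μ) := by
    rcases eq_or_ne a 0 with rfl | ha
    · simp
    · rw [Set.indicator_of_notMem (by simpa using ha), zero_mul, add_zero]
      refine mul_apply_le_mul_apply_of_monotone monotone_tanh ?_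
      rw [← sub_div, add_sub_cancel_right, ← mul_div_assoc]
      exact div_nonneg (mul_self_nonneg t) hμ
  have htanh : tanh ((t + ρ * a) / μ) * a ≤ |a| :=
    calc tanh ((t + ρ * a) / μ) * a ≤ |tanh ((t + ρ * a) / μ)| * |a| := by
          rw [← abs_mul]
          exact le_abs_self _
      _ ≤ |a| := mul_le_of_le_one_left (abs_nonneg a) (abs_tanh_lt_one _).le
  linarith [mul_le_mul_of_nonneg_left htanh hκ]

section LowerBound

variable {Ω : Type*} {mΩ : MeasurableSpace Ω} {P : Measure Ω} {W A : Ω → ℝ}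

lemma integral_indicator_comp_mul_comp_of_indepFun {α β : Type*} [MeasurableSpace α]
    [MeasurableSpace β] {X : Ω → α} {Y : Ω → β} (hXY : X ⟂ᵢ[P] Y) (hX : AEMeasurable X P)
    (hY : AEMeasurable Y P) {s : Set α} (hs : MeasurableSet s) {g : β → ℝ} (hg : Measurable g) :
    ∫ ω, s.indicator 1 (X ω) * g (Y ω) ∂P = (P.map X).real s * ∫ ω, g (Y ω) ∂P := by
  have hχ : Measurable (s.indicator 1 : α → ℝ) := measurable_one.indicator hs
  rw [hXY.integral_fun_comp_mul_comp hX hY hχ.aestronglyMeasurable hg.aestronglyMeasurable,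
    ← integral_map hX hχ.aestronglyMeasurable, integral_indicator_one hs]

/-- Monotonicity of `tanh` allows dropping `W` from `W * tanh ((W + ρ * A) / μ)`, and what remains
has mean zero by independence; only the event `A = 0`, where nothing is dropped, contributes. -/
lemma le_integral_tanh_add_mul_add (hW : Integrable W P) (hA : Integrable A P) (hWA : W ⟂ᵢ[P] A)
    (hW0 : P[W] = 0) {μ κ : ℝ} (hμ : 0 ≤ μ) (hκ : 0 ≤ κ) (ρ : ℝ) :
    (P.map A).real {0} * (∫ ω, W ω * tanh (W ω / μ) ∂P) - κ * ∫ ω, |A ω| ∂P ≤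
      ∫ ω, tanh ((W ω + ρ * A ω) / μ) * (W ω + -κ * A ω) ∂P := by
  have hχ : Measurable (Set.indicator {0} 1 : ℝ → ℝ) :=
    measurable_one.indicator (measurableSet_singleton 0)
  have hmeas (c : ℝ) : Measurable fun t => tanh (c * t / μ) :=
    continuous_tanh.measurable.comp (by fun_prop)
  have hint (Y : Ω → ℝ) (hY : AEStronglyMeasurable Y P) :
      Integrable (fun ω => W ω * tanh (Y ω)) P := by
    simpa only [smul_eq_mul, mul_comm] using integrable_tanh_smul hY hW
  have hintA := hint (fun ω => ρ * A ω / μ) (by fun_prop)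
  have hintχ : Integrable (fun ω => Set.indicator {0} 1 (A ω) * (W ω * tanh (W ω / μ))) P :=
    (hint (fun ω => W ω / μ) (by fun_prop)).bdd_mul (c := 1)
      (hχ.comp_aemeasurable hA.aemeasurable).aestronglyMeasurable
      (.of_forall fun ω => by by_cases h : A ω = 0 <;> simp [h])
  have hsum : Integrable (fun ω => W ω * tanh (ρ * A ω / μ) +
      Set.indicator {0} 1 (A ω) * (W ω * tanh (W ω / μ))) P := hintA.add hintχ
  have hmean : ∫ ω, W ω * tanh (ρ * A ω / μ) ∂P = 0 := by
    rw [hWA.integral_fun_comp_mul_comp (f := fun t => t) (g := fun a => tanh (ρ * a / μ))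
      hW.aemeasurable hA.aemeasurable (by fun_prop) (hmeas ρ).aestronglyMeasurable, hW0, zero_mul]
  calc (P.map A).real {0} * (∫ ω, W ω * tanh (W ω / μ) ∂P) - κ * ∫ ω, |A ω| ∂P
    _ = ∫ ω, (W ω * tanh (ρ * A ω / μ) + Set.indicator {0} 1 (A ω) * (W ω * tanh (W ω / μ)) -
        κ * |A ω|) ∂P := by
      rw [integral_sub hsum (hA.abs.const_mul κ), integral_add hintA hintχ, hmean,
        integral_const_mul, zero_add, integral_indicator_comp_mul_comp_of_indepFun hWA.symm
          hA.aemeasurable hW.aemeasurable (measurableSet_singleton 0)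
          (g := fun t => t * tanh (t / μ)) (measurable_id.mul (by simpa using hmeas 1))]
    _ ≤ ∫ ω, tanh ((W ω + ρ * A ω) / μ) * (W ω + -κ * A ω) ∂P :=
      integral_mono (hsum.sub (hA.abs.const_mul κ))
        (integrable_tanh_smul (by fun_prop) (hW.add (hA.const_mul _)))
        fun ω => le_tanh_add_mul_add hμ hκ ρ (W ω) (A ω)

lemma le_integral_mul_tanh [IsProbabilityMeasure P] (hW : MemLp W (4 : ℕ) P) {k μ : ℝ}
    (hk : 0 < k) (hkμ : k ≤ 1 / μ) :
    k * ∫ ω, W ω ^ 2 ∂P - k ^ 3 / 3 * ∫ ω, W ω ^ 4 ∂P ≤ ∫ ω, W ω * tanh (W ω / μ) ∂P := by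
  have h2 := (integrable_pow_of_memLp hW (k := 2) (by norm_num)).const_mul k
  have h4 := (integrable_pow_of_memLp hW le_rfl).const_mul (k ^ 3 / 3)
  have hint : Integrable (fun ω => W ω * tanh (W ω / μ)) P := by
    have hW1 := hW.integrable (by norm_num)
    simpa only [smul_eq_mul, mul_comm] using integrable_tanh_smul (by fun_prop) hW1
  calc k * ∫ ω, W ω ^ 2 ∂P - k ^ 3 / 3 * ∫ ω, W ω ^ 4 ∂P
    _ = ∫ ω, (k * W ω ^ 2 - k ^ 3 / 3 * W ω ^ 4) ∂P := by
      rw [integral_sub h2 h4, integral_const_mul, integral_const_mul]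
    _ ≤ ∫ ω, W ω * tanh (W ω / μ) ∂P :=
      integral_mono (h2.sub h4) hint fun ω => mul_sq_sub_le_mul_tanh_div hk hkμ (W ω)

end LowerBound

lemma indepFun_dotProduct_eval_bgVec {θ : ℝ} (hθ : θ ∈ Set.Icc 0 1) {n : ℕ} {v : Fin n → ℝ}
    {i : Fin n} (hv : v i = 0) :
    (fun x => v ⬝ᵥ x) ⟂ᵢ[bgVec θ n] fun x => x i := by
  have h := (iIndepFun_mul_eval_bgVec hθ (Function.update v i 1)).indepFun_finsetSum_of_notMem
    (fun j => by fun_prop) (Finset.notMem_erase i Finset.univ)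
  convert h using 1
  · ext x
    rw [Finset.sum_apply, dotProduct, ← Finset.sum_erase Finset.univ (a := i) (by simp [hv])]
    refine Finset.sum_congr rfl fun j hj => ?_
    rw [Function.update_of_ne (Finset.ne_of_mem_erase hj)]
  · simp

lemma le_integral_dotProduct_mul_tanh_bgVec {θ μ c r : ℝ} (hθ : θ ∈ Set.Ioc 0 1) (hμ : 0 < μ)
    (hc : 0 < c) (hr : μ * c ≤ r) {n : ℕ} {v : Fin n → ℝ} (hv : ∑ i, v i ^ 2 = r ^ 2) :
    θ * r * (c - c ^ 3) ≤ ∫ x, (v ⬝ᵥ x) * tanh ((v ⬝ᵥ x) / μ) ∂bgVec θ n := by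
  have hθ' := Set.Ioc_subset_Icc_self hθ
  have := isProbabilityMeasure_bgVec (n := n) hθ'
  have hr0 : 0 < r := (mul_pos hμ hc).trans_le hr
  have hk : c / r ≤ 1 / μ := by
    rw [div_le_div_iff₀ hr0 hμ]
    linarith
  calc θ * r * (c - c ^ 3) = c / r * (θ * r ^ 2) - (c / r) ^ 3 / 3 * (3 * θ * (r ^ 2) ^ 2) := by
        field_simp
    _ ≤ c / r * ∫ x, (v ⬝ᵥ x) ^ 2 ∂bgVec θ n -
        (c / r) ^ 3 / 3 * ∫ x, (v ⬝ᵥ x) ^ 4 ∂bgVec θ n := by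
        rw [integral_dotProduct_sq_bgVec hθ', hv]
        gcongr
        exact hv ▸ integral_dotProduct_pow_four_bgVec_le hθ v
    _ ≤ ∫ x, (v ⬝ᵥ x) * tanh ((v ⬝ᵥ x) / μ) ∂bgVec θ n :=
        le_integral_mul_tanh (memLp_dotProduct_bgVec hθ' 4 v) (div_pos hc hr0) hk

theorem statement5_general (n : ℕ) {θ μ c : ℝ} (hθ : θ ∈ Set.Ioc 0 1) (hμ : 0 < μ) (hc : 0 < c)
    {w : EuclideanSpace ℝ (Fin (n - 1))} (hw : μ * c ≤ ‖w‖) (hw1 : ‖w‖ < 1) :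
    θ * ((1 - θ) * (c - c ^ 3) - ‖w‖ / √(1 - ‖w‖ ^ 2)) ≤ ⟪w, gradient (Gexp n θ μ) w⟫ / ‖w‖ := by
  have hw0 : 0 < ‖w‖ := (mul_pos hμ hc).trans_le hw
  obtain - | m := n
  · exact absurd (norm_of_subsingleton (E := EuclideanSpace ℝ (Fin 0)) w) hw0.ne'
  have hθ' := Set.Ioc_subset_Icc_self hθ
  have := isProbabilityMeasure_bgVec (n := m + 1) hθ'
  have hW := (memLp_dotProduct_bgVec hθ' 1 (appendLast (m + 1) (w, 0))).integrable (by simp)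
  have hκ : 0 ≤ ‖w‖ ^ 2 / √(1 - ‖w‖ ^ 2) := by positivity
  have hbound := le_integral_tanh_add_mul_add hW (integrable_eval_bgVec hθ' (Fin.last m))
    (indepFun_dotProduct_eval_bgVec hθ' (appendLast_last w 0)) (integral_dotProduct_bgVec hθ' _)
    hμ.le hκ √(1 - ‖w‖ ^ 2)
  have htanh := le_integral_dotProduct_mul_tanh_bgVec hθ hμ hc hw (sum_appendLast_zero_sq w)
  rw [(measurePreserving_eval_bgVec hθ' (Fin.last m)).map_eq, measureReal_bg_singleton_zero hθ',
    integral_eval_bgVec hθ' (Fin.last m) continuous_abs] at hbound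
  rw [le_div_iff₀ hw0, inner_gradient_Gexp_self hθ' hμ.ne' hw1, qmap_eq_appendLast]
  simp_rw [appendLast_dotProduct w (√_), appendLast_dotProduct w (-_)]
  refine le_trans ?_ hbound
  calc θ * ((1 - θ) * (c - c ^ 3) - ‖w‖ / √(1 - ‖w‖ ^ 2)) * ‖w‖
    _ = (1 - θ) * (θ * ‖w‖ * (c - c ^ 3)) - ‖w‖ ^ 2 / √(1 - ‖w‖ ^ 2) * θ := by ring
    _ ≤ _ := by
      gcongr
      · exact sub_nonneg.2 hθ.2
      · exact integral_abs_bg_le hθ'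

lemma one_div_twenty_mul_sqrt_five_le : 1 / (20 * √5) ≤ 1 / 40 := by
  have : (2 : ℝ) ≤ √5 := le_sqrt_of_sq_le (by norm_num)
  exact one_div_le_one_div_of_le (by norm_num) (by linarith)

lemma div_twenty_mul_sqrt_two_pi_le {θ r : ℝ} (hθ : θ ∈ Set.Icc 0 (1 / 2))
    (hr : r ∈ Set.Icc 0 (1 / 40)) :
    θ / (20 * √(2 * π)) ≤
      θ * ((1 - θ) * (1 / (4 * √2) - (1 / (4 * √2)) ^ 3) - r / √(1 - r ^ 2)) := by
  obtain ⟨hθ0, hθ1⟩ := hθ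
  obtain ⟨hr0, hr1⟩ := hr
  set c : ℝ := 1 / (4 * √2) with hc_def
  have hc0 : 0 < c := by positivity
  have hc2 : c ^ 2 = 1 / 32 := by
    rw [hc_def, div_pow, mul_pow, sq_sqrt zero_le_two]
    norm_num
  have hc : 17 / 100 ≤ c := by nlinarith
  have hcubic : c - c ^ 3 = 31 / 32 * c := by
    rw [pow_succ, hc2]
    ring
  have hρ : 9 / 10 ≤ √(1 - r ^ 2) := le_sqrt_of_sq_le (by nlinarith)
  have hquot : r / √(1 - r ^ 2) ≤ 1 / 36 := by
    rw [div_le_iff₀ (by linarith)]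
    linarith
  have hπ : 1 / (20 * √(2 * π)) ≤ 1 / 40 := by
    have : (2 : ℝ) ≤ √(2 * π) := le_sqrt_of_sq_le (by nlinarith [pi_gt_three])
    exact one_div_le_one_div_of_le (by norm_num) (by linarith)
  rw [hcubic, div_eq_mul_one_div]
  gcongr
  nlinarith

/-- Proposition: large gradient region of the expected objective. -/
theorem statement5 (n : ℕ) (θ μ : ℝ) (hθ : θ ∈ Set.Ioo (0 : ℝ) (1 / 2)) (hμ0 : 0 < μ)
    (hμ : μ ≤ 9 / 50) (w : EuclideanSpace ℝ (Fin (n - 1)))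
    (hw1 : μ / (4 * Real.sqrt 2) ≤ ‖w‖) (hw2 : ‖w‖ ≤ 1 / (20 * Real.sqrt 5)) :
    θ / (20 * Real.sqrt (2 * π)) ≤ ⟪w, gradient (Gexp n θ μ) w⟫ / ‖w‖ := by
  have hw := hw2.trans one_div_twenty_mul_sqrt_five_le
  exact (div_twenty_mul_sqrt_two_pi_le (Set.Ioo_subset_Icc_self hθ) ⟨norm_nonneg w, hw⟩).trans <|
    statement5_general n ⟨hθ.1, by linarith [hθ.2]⟩ hμ0 (by positivity) (by rwa [mul_one_div])
      (by linarith)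

end
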